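/- There is no separable complex Banach algebra B such that every separable complex Banach algebra A admits a bounded homomorphic embedding into B; that is, for every separable Banach algebra B there exists a separable Banach algebra A such that no injective bounded algebra homomorphism φ : A → B is bounded below (i.e., there is no c > 0 with c‖a‖ ≤ ‖φ(a)‖ for all a). Moreover, such an A can be chosen commutative. -/

import Mathlib

/-- A bundled separable complex Banach algebra: a complete normed (not
necessarily unital, not necessarily commutative) ring which is a normed space
over `ℂ` whose multiplication is `ℂ`-bilinear, and whose underlying metric
space is separable. -/
structure SepBanachAlgebra : Type 1 where
  carrier : Type
  [ring : NonUnitalNormedRing carrier]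
  [normedSpace : NormedSpace ℂ carrier]
  [tower : IsScalarTower ℂ carrier carrier]
  [smulComm : SMulCommClass ℂ carrier carrier]
  [complete : CompleteSpace carrier]
  [separable : TopologicalSpace.SeparableSpace carrier]

attribute [instance] SepBanachAlgebra.ring SepBanachAlgebra.normedSpace
  SepBanachAlgebra.tower SepBanachAlgebra.smulComm
  SepBanachAlgebra.complete SepBanachAlgebra.separable

/-!
Davie's construction gives Banach spaces `X`, `Y`, a pairing `P` of `X` with `Y`, and blocks of
vectors `x k j`, `y k j` with `j ∈ I k`, such that `P (x k i) (y l j) = 0` for `k ≠ l`, while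
the block averages of the tensors `x k j ⊗ y k j` all have trace `1` and yet form a Cauchy
sequence in the projective tensor product. So their limit is a tensor of trace `1` that induces the
zero operator: the approximation property fails. The sequence is Cauchy because `y (k + 1) j` is an
average of the coordinate functionals of level `k + 1` and also of those of level `k`, so that
consecutive block averages can be compared over the same functionals, where character sums bound the
difference by a convergent series.

For `t ⊆ ℕ` there is a commutative separable Banach algebra `A t` with bounded linear maps `f` of
`X` and `g` of `Y` into it, such that `f x * g y = P x y • w` with `w ≠ 0`, and with an element `p`
that divides `f (x k j)` for `k ∈ t` and annihilates `g (y k j)` for `k ∉ t`. Suppose that all of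
them embed in one separable algebra. As there are uncountably many `t`, for two of them, `s` and
`t`, all constants are controlled, the elements `p` nearly agree, the maps `f` nearly agree on a
block `k₀`, and `s` contains some `k ≥ k₀` that is not in `t`. The average of
`f_s (x k j) * g_t (y k j)` over the block `k` is then nearly `0`, as
`f_s (x k j) = q_s (x k j) * p_s` and `p_t * g_t (y k j) = 0`, whereas its average over the block
`k₀` is nearly `w_t`. The Cauchy property contradicts this.
-/

set_option maxSynthPendingDepth 3

open ContinuousLinearMap ComplexConjugate TopologicalSpace

section BilinearMultiplication

variable {E : Type} [NormedAddCommGroup E] [NormedSpace ℂ E] [CompleteSpace E] [SeparableSpace E]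

/-- The Banach algebra structure on `E` given by a contractive associative bilinear map. -/
noncomputable def SepBanachAlgebra.ofMul (m : E →L[ℂ] E →L[ℂ] E)
    (norm_le : ∀ x y, ‖m x y‖ ≤ ‖x‖ * ‖y‖)
    (assoc : ∀ x y z, m (m x y) z = m x (m y z)) : SepBanachAlgebra :=
  letI ring : NonUnitalNormedRing E :=
    { ‹NormedAddCommGroup E› with
      mul := fun x y => m x y
      mul_assoc := assoc
      left_distrib := fun x y z => map_add (m x) y z
      right_distrib := fun x y z => m.map_add₂ x y z
      zero_mul := fun x => m.map_zero₂ x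
      mul_zero := fun x => map_zero (m x)
      norm_mul_le := norm_le }
  { carrier := E
    ring := ring
    normedSpace := ‹NormedSpace ℂ E›
    tower := ⟨fun c x y => by
      change m (c • x) y = c • m x y
      simp⟩
    smulComm := ⟨fun c x y => by
      change c • m x y = m x (c • y)
      simp⟩
    complete := ‹CompleteSpace E›
    separable := ‹SeparableSpace E› }

theorem exists_sepBanachAlgebra_equiv (m : E →L[ℂ] E →L[ℂ] E)
    (assoc : ∀ x y z, m (m x y) z = m x (m y z)) :
    ∃ (A : SepBanachAlgebra) (e : E ≃L[ℂ] A.carrier), ∀ x y, e (m x y) = e x * e y := by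
  have hpos : 0 < ‖m‖ + 1 := by positivity
  set c : ℂ := ((‖m‖ + 1 : ℝ) : ℂ)
  have hc : c ≠ 0 := Complex.ofReal_ne_zero.2 hpos.ne'
  have hnorm (x y : E) : ‖c⁻¹ • m x y‖ ≤ ‖x‖ * ‖y‖ := by
    rw [norm_smul, norm_inv, Complex.norm_of_nonneg hpos.le, inv_mul_le_iff₀ hpos]
    calc ‖m x y‖ ≤ ‖m‖ * ‖x‖ * ‖y‖ := m.le_opNorm₂ x y
      _ ≤ (‖m‖ + 1) * (‖x‖ * ‖y‖) := by
        rw [mul_assoc]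
        gcongr
        linarith
  refine ⟨.ofMul (c⁻¹ • m) hnorm fun x y z => by simp [assoc],
    ContinuousLinearEquiv.smulLeft (Units.mk0 c hc), fun x y => ?_⟩
  change c • m x y = (c⁻¹ • m) (c • x) (c • y)
  simp [smul_smul, hc]

end BilinearMultiplication

section GradedMultiplication

variable {V W : Type*} [NormedAddCommGroup V] [NormedSpace ℂ V] [NormedAddCommGroup W]
  [NormedSpace ℂ W]

/-- The commutative multiplication on `V ⊕ W ⊕ ℂ`, graded in degrees `1, 2, 3`, whose products
`V × V → W` and `V × W → ℂ` are `β` and `γ`. -/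
noncomputable def gradedMul (β : V →L[ℂ] V →L[ℂ] W) (γ : V →L[ℂ] W →L[ℂ] ℂ) :
    (V × W × ℂ) →L[ℂ] (V × W × ℂ) →L[ℂ] (V × W × ℂ) :=
  let degOne := fst ℂ V (W × ℂ)
  let degTwo := fst ℂ W ℂ ∘L snd ℂ V (W × ℂ)
  postcomp _ (inr ℂ V (W × ℂ) ∘L inl ℂ W ℂ) ∘L β.bilinearComp degOne degOne +
    postcomp _ (inr ℂ V (W × ℂ) ∘L inr ℂ W ℂ) ∘L
      (γ.bilinearComp degOne degTwo + (γ.bilinearComp degOne degTwo).flip)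

variable (β : V →L[ℂ] V →L[ℂ] W) (γ : V →L[ℂ] W →L[ℂ] ℂ)

@[simp]
theorem gradedMul_apply (a b : V × W × ℂ) :
    gradedMul β γ a b = (0, β a.1 b.1, γ a.1 b.2.1 + γ b.1 a.2.1) := by
  simp [gradedMul]

variable {β γ}

theorem gradedMul_comm (hβ : ∀ a b, β a b = β b a) (a b : V × W × ℂ) :
    gradedMul β γ a b = gradedMul β γ b a := by
  simp [hβ a.1, add_comm]

theorem gradedMul_assoc (hγ : ∀ a b c, γ a (β b c) = γ c (β a b)) (a b c : V × W × ℂ) :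
    gradedMul β γ (gradedMul β γ a b) c = gradedMul β γ a (gradedMul β γ b c) := by
  simp [hγ a.1]

end GradedMultiplication

section PairingRealization

variable {X Y B : Type*} [NormedAddCommGroup X] [NormedSpace ℂ X] [NormedAddCommGroup Y]
  [NormedSpace ℂ Y] [NonUnitalNormedRing B] [NormedSpace ℂ B]

/-- A realization of the pairing `P` inside the algebra `B`, in which `f z` is a multiple of the
single element `p` for `z` in the submodule `Z`, while `p` annihilates `g y` for `y` in the
annihilator of `Z`. -/
structure PairingRealization (P : X →L[ℂ] Y →L[ℂ] ℂ) (Z : Submodule ℂ X) (B : Type*)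
    [NonUnitalNormedRing B] [NormedSpace ℂ B] where
  f : X →L[ℂ] B
  g : Y →L[ℂ] B
  q : Z →L[ℂ] B
  p : B
  w : B
  w_ne_zero : w ≠ 0
  f_mul_g : ∀ x y, f x * g y = P x y • w
  q_mul_p : ∀ z : Z, q z * p = f z
  p_mul_g : ∀ y, (∀ z ∈ Z, P z y = 0) → p * g y = 0

/-- Transport of a realization along an injective bounded homomorphism. -/
noncomputable def PairingRealization.map {P : X →L[ℂ] Y →L[ℂ] ℂ} {Z : Submodule ℂ X} {A : Type*}
    [NonUnitalNormedRing A] [NormedSpace ℂ A] (r : PairingRealization P Z A) (φ : A →ₙₐ[ℂ] B)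
    (inj : Function.Injective φ) (bdd : ∃ C : ℝ, ∀ a, ‖φ a‖ ≤ C * ‖a‖) :
    PairingRealization P Z B :=
  let Φ : A →L[ℂ] B := LinearMap.mkContinuousOfExistsBound (φ : A →ₗ[ℂ] B) bdd
  { f := Φ ∘L r.f
    g := Φ ∘L r.g
    q := Φ ∘L r.q
    p := φ r.p
    w := φ r.w
    w_ne_zero := (map_ne_zero_iff φ inj).2 r.w_ne_zero
    f_mul_g := fun x y => by
      change φ (r.f x) * φ (r.g y) = P x y • φ r.w
      rw [← map_mul, r.f_mul_g, map_smul]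
    q_mul_p := fun z => by
      change φ (r.q z) * φ r.p = φ (r.f z)
      rw [← map_mul, r.q_mul_p]
    p_mul_g := fun y hy => by
      change φ r.p * φ (r.g y) = 0
      rw [← map_mul, r.p_mul_g y hy, map_zero] }

end PairingRealization

theorem separableSpace_topologicalClosure {E : Type*} [NormedAddCommGroup E] [NormedSpace ℂ E]
    {M : Submodule ℂ E} (hM : IsSeparable (M : Set E)) : SeparableSpace M.topologicalClosure :=
  hM.closure.separableSpace

theorem exists_isClosed_separableSpace_mem {F E : Type*} [NormedAddCommGroup F] [NormedSpace ℂ F]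
    [SeparableSpace F] [NormedAddCommGroup E] [NormedSpace ℂ E] (T : F →L[ℂ] E) :
    ∃ K : Submodule ℂ E, IsClosed (K : Set E) ∧ SeparableSpace K ∧ ∀ x, T x ∈ K :=
  ⟨T.range.topologicalClosure, T.range.isClosed_topologicalClosure,
    separableSpace_topologicalClosure (isSeparable_range T.continuous),
    fun x => T.range.le_topologicalClosure (LinearMap.mem_range_self _ x)⟩

section PairingAlgebra

variable {X Y Z K : Type*} [NormedAddCommGroup X] [NormedSpace ℂ X] [NormedAddCommGroup Y]
  [NormedSpace ℂ Y] [NormedAddCommGroup Z] [NormedSpace ℂ Z] [NormedAddCommGroup K]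
  [NormedSpace ℂ K] (P : X →L[ℂ] Y →L[ℂ] ℂ) (ι : Z →L[ℂ] X) (κ : Y →L[ℂ] K)
  (ev : K →L[ℂ] Z →L[ℂ] ℂ)

/-- The product of degree-one elements of the pairing algebra: `ℂ` acts on `Z` through `ι` and on
`Y` through `κ`, and `Z` is paired with `Y`. -/
noncomputable def pairingMulOne : (ℂ × Z × Y) →L[ℂ] (ℂ × Z × Y) →L[ℂ] (X × K × ℂ) :=
  let toC := fst ℂ ℂ (Z × Y)
  let toZ := fst ℂ Z Y ∘L snd ℂ ℂ (Z × Y)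
  let toY := snd ℂ Z Y ∘L snd ℂ ℂ (Z × Y)
  let β :=
    postcomp _ (inl ℂ X (K × ℂ)) ∘L (lsmul ℂ ℂ).bilinearComp toC (ι ∘L toZ) +
      postcomp _ (inr ℂ X (K × ℂ) ∘L inl ℂ K ℂ) ∘L (lsmul ℂ ℂ).bilinearComp toC (κ ∘L toY) +
      postcomp _ (inr ℂ X (K × ℂ) ∘L inr ℂ K ℂ) ∘L P.bilinearComp (ι ∘L toZ) toY
  β + β.flip

@[simp]
theorem pairingMulOne_apply (a b : ℂ × Z × Y) :
    pairingMulOne P ι κ a b =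
      (a.1 • ι b.2.1 + b.1 • ι a.2.1, a.1 • κ b.2.2 + b.1 • κ a.2.2,
        P (ι a.2.1) b.2.2 + P (ι b.2.1) a.2.2) := by
  simp [pairingMulOne]

/-- The product of elements of degrees one and two of the pairing algebra: `X` is paired with `Y`
by `P`, and `K` with `Z` by `ev`. -/
noncomputable def pairingMulTwo : (ℂ × Z × Y) →L[ℂ] (X × K × ℂ) →L[ℂ] ℂ :=
  P.flip.bilinearComp (snd ℂ Z Y ∘L snd ℂ ℂ (Z × Y)) (fst ℂ X (K × ℂ)) +
    ev.flip.bilinearComp (fst ℂ Z Y ∘L snd ℂ ℂ (Z × Y)) (fst ℂ K ℂ ∘L snd ℂ X (K × ℂ)) +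
    (mul ℂ ℂ).bilinearComp (fst ℂ ℂ (Z × Y)) (snd ℂ K ℂ ∘L snd ℂ X (K × ℂ))

@[simp]
theorem pairingMulTwo_apply (a : ℂ × Z × Y) (b : X × K × ℂ) :
    pairingMulTwo P ev a b = P b.1 a.2.2 + ev b.2.1 a.2.1 + a.1 * b.2.2 := by
  simp [pairingMulTwo]

/-- The multiplication of the pairing algebra. Its Banach algebra realizes `P`: the element `p` is
`1 ∈ ℂ` in degree one, `q` and `g` embed `Z` and `Y` in degree one, `f` embeds `X` in degree two,
and `w` spans degree three. -/
noncomputable abbrev pairingMul := gradedMul (pairingMulOne P ι κ) (pairingMulTwo P ev)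

theorem pairingMul_comm (a b) : pairingMul P ι κ ev a b = pairingMul P ι κ ev b a :=
  gradedMul_comm (fun a b => by simp [add_comm]) a b

variable {P ι κ ev}

theorem pairingMul_assoc (hev : ∀ y z, ev (κ y) z = P (ι z) y) (a b c) :
    pairingMul P ι κ ev (pairingMul P ι κ ev a b) c =
      pairingMul P ι κ ev a (pairingMul P ι κ ev b c) :=
  gradedMul_assoc (fun a b c => by simp [hev]; ring) a b c

end PairingAlgebra

section Existence

variable {X Y : Type} [NormedAddCommGroup X] [NormedSpace ℂ X] [CompleteSpace X]
  [SeparableSpace X] [NormedAddCommGroup Y] [NormedSpace ℂ Y] [CompleteSpace Y]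
  [SeparableSpace Y] (P : X →L[ℂ] Y →L[ℂ] ℂ)

theorem exists_comm_sepBanachAlgebra_pairing {Z K : Type} [NormedAddCommGroup Z] [NormedSpace ℂ Z]
    [CompleteSpace Z] [SeparableSpace Z] [NormedAddCommGroup K] [NormedSpace ℂ K]
    [CompleteSpace K] [SeparableSpace K] (ι : Z →L[ℂ] X) (κ : Y →L[ℂ] K) (ev : K →L[ℂ] Z →L[ℂ] ℂ)
    (hev : ∀ y z, ev (κ y) z = P (ι z) y) :
    ∃ A : SepBanachAlgebra, (∀ x y : A.carrier, x * y = y * x) ∧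
      ∃ (f : X →L[ℂ] A.carrier) (g : Y →L[ℂ] A.carrier) (q : Z →L[ℂ] A.carrier) (p w : A.carrier),
        w ≠ 0 ∧ (∀ x y, f x * g y = P x y • w) ∧ (∀ z, q z * p = f (ι z)) ∧
          ∀ y, κ y = 0 → p * g y = 0 := by
  obtain ⟨A, e, he⟩ := exists_sepBanachAlgebra_equiv (pairingMul P ι κ ev) (pairingMul_assoc hev)
  let degOne := inl ℂ (ℂ × Z × Y) ((X × K × ℂ) × ℂ) ∘L inr ℂ ℂ (Z × Y)
  let degTwo := inr ℂ (ℂ × Z × Y) ((X × K × ℂ) × ℂ) ∘L inl ℂ (X × K × ℂ) ℂ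
  refine ⟨A, e.surjective.forall₂.2 fun x y => ?_, e ∘L degTwo ∘L inl ℂ X (K × ℂ),
    e ∘L degOne ∘L inr ℂ Z Y, e ∘L degOne ∘L inl ℂ Z Y, e ((1, 0, 0), 0, 0), e (0, 0, 1),
    by simp, fun x y => ?_, fun z => ?_, fun y hy => ?_⟩
  · rw [← he, ← he, pairingMul_comm]
  · rw [← map_smul e (P x y)]
    simp [degOne, degTwo, ← he]
  · simp [degOne, degTwo, ← he]
  · simp [degOne, ← he, hy]

theorem exists_comm_pairingRealization {Z : Submodule ℂ X} (hZ : IsClosed (Z : Set X)) :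
    ∃ A : SepBanachAlgebra, (∀ x y : A.carrier, x * y = y * x) ∧
      Nonempty (PairingRealization P Z A.carrier) := by
  have : CompleteSpace Z := hZ.completeSpace_coe
  have : SeparableSpace Z := (IsSeparable.of_separableSpace _).separableSpace
  obtain ⟨K, hK, _, hmem⟩ := exists_isClosed_separableSpace_mem (P ∘L Z.subtypeL).flip
  have : CompleteSpace K := hK.completeSpace_coe
  let κ : Y →L[ℂ] K := (P ∘L Z.subtypeL).flip.codRestrict K hmem
  obtain ⟨A, comm, f, g, q, p, w, hw, hfg, hqp, hpg⟩ :=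
    exists_comm_sepBanachAlgebra_pairing P Z.subtypeL κ K.subtypeL fun _ _ => rfl
  exact ⟨A, comm, ⟨f, g, q, p, w, hw, hfg, hqp, fun y hy => hpg y <| Subtype.ext <|
    ContinuousLinearMap.ext fun z => hy z z.2⟩⟩

end Existence

section Mean

variable {ι E F : Type*} [Fintype ι] [NormedAddCommGroup E] [NormedSpace ℂ E]
  [NormedAddCommGroup F] [NormedSpace ℂ F]

/-- The average of a finite family of vectors. It takes the place of `Finset.expect`, which asks
for a `ℚ≥0`-module structure. -/
noncomputable def mean (v : ι → E) : E := (Fintype.card ι : ℂ)⁻¹ • ∑ j, v j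

theorem map_mean (T : E →L[ℂ] F) (v : ι → E) : T (mean v) = mean fun j => T (v j) := by
  simp [mean]

theorem mean_sub (v v' : ι → E) : mean (fun j => v j - v' j) = mean v - mean v' := by
  simp [mean, smul_sub]

theorem mean_eq_zero_of_sum_eq_zero {v : ι → E} (hv : ∑ j, v j = 0) : mean v = 0 := by
  rw [mean, hv, smul_zero]

theorem mean_conj (v : ι → ℂ) : (mean fun j => conj (v j)) = conj (mean v) := by
  simp [mean]

theorem mean_apply_mean {κ G : Type*} [Fintype κ] [NormedAddCommGroup G] [NormedSpace ℂ G]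
    (T : E →L[ℂ] F →L[ℂ] G) (c : ι → κ → ℂ) (x : ι → E) (y : κ → F) :
    mean (fun j => T (x j) (mean fun i => c j i • y i)) =
      mean fun i => T (mean fun j => c j i • x j) (y i) := by
  simp only [mean, map_smul, map_sum, smul_apply, sum_apply, ← Finset.smul_sum]
  rw [Finset.sum_comm, smul_comm]

variable [Nonempty ι]

theorem mean_const (c : E) : mean (fun _ : ι => c) = c := by
  simp [mean, ← Nat.cast_smul_eq_nsmul ℂ, smul_smul]

theorem mean_conj_mul_self {v : ι → ℂ} (hv : ∀ j, ‖v j‖ = 1) :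
    (mean fun j => conj (v j) * v j) = 1 := by
  simp_rw [Complex.conj_mul', hv]
  simpa using mean_const (ι := ι) (1 : ℂ)

theorem norm_mean_le {v : ι → E} {r : ℝ} (h : ∀ j, ‖v j‖ ≤ r) : ‖mean v‖ ≤ r := by
  have hcard : (0 : ℝ) < Fintype.card ι := by exact_mod_cast Fintype.card_pos
  rw [mean, norm_smul, norm_inv, Complex.norm_natCast, inv_mul_le_iff₀ hcard]
  simpa using norm_sum_le_of_le Finset.univ fun j _ => h j

end Mean

section Pigeonhole

theorem exists_ne_dist_lt_of_uncountable {α κ V : Type*} [Uncountable α] [Countable κ]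
    [PseudoMetricSpace V] [SeparableSpace V] (c : α → κ) (F : α → V) {ε : ℝ} (hε : 0 < ε) :
    ∃ s t, s ≠ t ∧ c s = c t ∧ dist (F s) (F t) < ε := by
  have : Nonempty V := (inferInstance : Nonempty α).map F
  choose n hn using fun a => (denseRange_denseSeq V).exists_dist_lt (F a) (half_pos hε)
  obtain ⟨s, t, hst, hne⟩ := Function.not_injective_iff.1 fun h : Function.Injective
    (fun a => (c a, n a)) => not_countable_iff.2 ‹Uncountable α› h.countable
  obtain ⟨hc, hnst⟩ := Prod.mk.inj hst
  refine ⟨s, t, hne, hc, ?_⟩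
  calc dist (F s) (F t) ≤ dist (F s) (denseSeq V (n s)) + dist (F t) (denseSeq V (n s)) :=
        dist_triangle_right _ _ _
    _ < ε / 2 + ε / 2 := add_lt_add (hn s) (hnst ▸ hn t)
    _ = ε := add_halves ε

theorem exists_nat_forall_exists_dist_lt (size : Set ℕ → ℝ) :
    ∃ n : ℕ, 0 < n ∧ ∀ {V : Type*} [PseudoMetricSpace V] [SeparableSpace V] (F : Set ℕ → V) (m : ℕ)
      {ε : ℝ}, 0 < ε → ∃ s t, size s ≤ n ∧ size t ≤ n ∧ dist (F s) (F t) < ε ∧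
        ∃ k ≥ m, k ∈ s ∧ k ∉ t := by
  have : Uncountable (Set ℕ) := by
    rw [← Cardinal.aleph0_lt_mk_iff, Cardinal.mk_set, Cardinal.mk_nat]
    exact Cardinal.cantor _
  obtain ⟨n, hn⟩ := Cardinal.exists_uncountable_fiber (fun t => ⌈size t⌉₊) (by
    simpa using Cardinal.cantor Cardinal.aleph0)
  refine ⟨n + 1, n.succ_pos, fun {V} _ _ F m ε hε => ?_⟩
  have hsize (t : (fun t => ⌈size t⌉₊) ⁻¹' {n}) : size t ≤ (n + 1 : ℕ) :=
    (Nat.ceil_le.1 t.2.le).trans (by exact_mod_cast n.le_succ)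
  obtain ⟨s, t, hne, hcode, hdist⟩ := exists_ne_dist_lt_of_uncountable
    (fun t : (fun t => ⌈size t⌉₊) ⁻¹' {n} => fun i : Fin m => (i : ℕ) ∈ t.1) (fun t => F t) hε
  obtain ⟨k, hk⟩ : ∃ k, ¬(k ∈ s.1 ↔ k ∈ t.1) := by
    by_contra! heq
    exact hne (Subtype.ext (Set.ext heq))
  have hmk : m ≤ k := le_of_not_gt fun hlt => hk (iff_of_eq (congrFun hcode ⟨k, hlt⟩))
  by_cases hks : k ∈ s.1
  · exact ⟨s, t, hsize s, hsize t, hdist, k, hmk, hks, fun hkt => hk (iff_of_true hks hkt)⟩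
  · exact ⟨t, s, hsize t, hsize s, dist_comm (F t) (F s) ▸ hdist, k, hmk,
      by_contra fun hkt => hk (iff_of_false hks hkt), hks⟩

end Pigeonhole

section BlockSystem

variable {X Y E B : Type*} [NormedAddCommGroup X] [NormedSpace ℂ X] [NormedAddCommGroup Y]
  [NormedSpace ℂ Y] [NormedAddCommGroup E] [NormedSpace ℂ E]

/-- Blocks of vectors `x k j` in the unit ball of `X` and `y k j` in the unit ball of `Y`, with
`j ∈ I k`, paired to `1` on the diagonal and to `0` across different blocks. -/
structure BlockSystem (P : X →L[ℂ] Y →L[ℂ] ℂ) (I : ℕ → Type*) where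
  x : ∀ k, I k → X
  y : ∀ k, I k → Y
  norm_x_le : ∀ k j, ‖x k j‖ ≤ 1
  norm_y_le : ∀ k j, ‖y k j‖ ≤ 1
  pairing_self : ∀ k j, P (x k j) (y k j) = 1
  pairing_of_ne : ∀ k l, k ≠ l → ∀ i j, P (x k i) (y l j) = 0

namespace BlockSystem

variable {P : X →L[ℂ] Y →L[ℂ] ℂ} {I : ℕ → Type*} (S : BlockSystem P I)

/-- The closed subspace generated by the blocks `x k` with `k ∈ t`. -/
def blockSpan (t : Set ℕ) : Submodule ℂ X :=
  (Submodule.span ℂ (⋃ k ∈ t, Set.range (S.x k))).topologicalClosure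

theorem x_mem_blockSpan {t : Set ℕ} {k : ℕ} (hk : k ∈ t) (j : I k) : S.x k j ∈ S.blockSpan t :=
  Submodule.le_topologicalClosure _ <| Submodule.subset_span <|
    Set.mem_biUnion hk (Set.mem_range_self j)

theorem isClosed_blockSpan (t : Set ℕ) : IsClosed (S.blockSpan t : Set X) :=
  Submodule.isClosed_topologicalClosure _

theorem pairing_eq_zero_of_mem_blockSpan {t : Set ℕ} {l : ℕ} (hl : l ∉ t) (j : I l) {z : X}
    (hz : z ∈ S.blockSpan t) : P z (S.y l j) = 0 := by
  suffices h : S.blockSpan t ≤ (P.flip (S.y l j)).ker from h hz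
  refine Submodule.topologicalClosure_minimal _ (Submodule.span_le.2 ?_) (isClosed_ker _)
  refine Set.iUnion₂_subset fun k hk => Set.range_subset_iff.2 fun i => ?_
  exact S.pairing_of_ne k l (fun h => hl (h ▸ hk)) i j

variable [∀ k, Fintype (I k)]

/-- The average of the tensors `x k j ⊗ y k j` over the block `k`, tested against `F`. -/
noncomputable def blockMean (F : X →L[ℂ] Y →L[ℂ] E) (k : ℕ) : E :=
  mean fun j => F (S.x k j) (S.y k j)

/-- The averages of `x k j ⊗ y k j` over the blocks form a Cauchy sequence in the projective
tensor product of `X` and `Y`, as far as bilinear maps into `E` can tell. -/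
def BlockMeanCauchy (E : Type*) [NormedAddCommGroup E] [NormedSpace ℂ E] : Prop :=
  ∀ ε > 0, ∃ k₀, ∀ k ≥ k₀, ∀ F : X →L[ℂ] Y →L[ℂ] E,
    ‖S.blockMean F k - S.blockMean F k₀‖ ≤ ε * ‖F‖

end BlockSystem

end BlockSystem

namespace PairingRealization

variable {X Y B : Type*} [NormedAddCommGroup X] [NormedSpace ℂ X] [NormedAddCommGroup Y]
  [NormedSpace ℂ Y] [NonUnitalNormedRing B] [NormedSpace ℂ B] {P : X →L[ℂ] Y →L[ℂ] ℂ}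

/-- A bound for all the data of a realization, including the size of `w` from below. -/
noncomputable def size {Z : Submodule ℂ X} (r : PairingRealization P Z B) : ℝ :=
  1 ⊔ ‖r.f‖ ⊔ ‖r.g‖ ⊔ ‖r.q‖ ⊔ ‖r.w‖⁻¹

theorem size_le_iff {Z : Submodule ℂ X} {r : PairingRealization P Z B} {M : ℝ} :
    r.size ≤ M ↔ 1 ≤ M ∧ ‖r.f‖ ≤ M ∧ ‖r.g‖ ≤ M ∧ ‖r.q‖ ≤ M ∧ ‖r.w‖⁻¹ ≤ M := by
  simp [size, and_assoc]

section BlockSystem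

variable [IsScalarTower ℂ B B] [SMulCommClass ℂ B B] {I : ℕ → Type*} [∀ k, Fintype (I k)]
  [∀ k, Nonempty (I k)] (S : BlockSystem P I) {Z Z' : Submodule ℂ X}
  (r : PairingRealization P Z B) (r' : PairingRealization P Z' B)

/-- The bilinear map `(x, y) ↦ f x * g y` formed from two different realizations. -/
noncomputable def crossMul : X →L[ℂ] Y →L[ℂ] B := (mul ℂ B).bilinearComp r.f r'.g

@[simp]
theorem crossMul_apply (x : X) (y : Y) : r.crossMul r' x y = r.f x * r'.g y := rfl

theorem norm_crossMul_le : ‖r.crossMul r'‖ ≤ ‖r.f‖ * ‖r'.g‖ :=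
  opNorm_le_bound₂ _ (by positivity) fun x y =>
    calc ‖r.f x * r'.g y‖ ≤ ‖r.f x‖ * ‖r'.g y‖ := norm_mul_le _ _
      _ ≤ (‖r.f‖ * ‖x‖) * (‖r'.g‖ * ‖y‖) := by
        gcongr
        exacts [r.f.le_opNorm x, r'.g.le_opNorm y]
      _ = ‖r.f‖ * ‖r'.g‖ * ‖x‖ * ‖y‖ := by ring

/-- On a block inside `Z` and annihilated by `Z'`, the product `f x * g y` equals
`q x * (p - p') * g y`. -/
theorem norm_blockMean_crossMul_le {k : ℕ} (hmem : ∀ j, S.x k j ∈ Z)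
    (hann : ∀ j, ∀ z ∈ Z', P z (S.y k j) = 0) :
    ‖S.blockMean (r.crossMul r') k‖ ≤ ‖r.q‖ * ‖r.p - r'.p‖ * ‖r'.g‖ := by
  refine norm_mean_le fun j => ?_
  have factor : r.f (S.x k j) * r'.g (S.y k j) =
      r.q ⟨S.x k j, hmem j⟩ * (r.p - r'.p) * r'.g (S.y k j) := by
    rw [mul_sub, sub_mul, mul_assoc _ r'.p, r'.p_mul_g _ (hann j), r.q_mul_p, mul_zero, sub_zero]
  rw [crossMul_apply, factor]
  refine (norm_mul₃_le).trans ?_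
  gcongr
  exacts [r.q.unit_le_opNorm _ (S.norm_x_le k j), r'.g.unit_le_opNorm _ (S.norm_y_le k j)]

theorem norm_blockMean_crossMul_sub_w_le {k : ℕ} {ε : ℝ}
    (hf : ∀ j, ‖r.f (S.x k j) - r'.f (S.x k j)‖ ≤ ε) :
    ‖S.blockMean (r.crossMul r') k - r'.w‖ ≤ ε * ‖r'.g‖ := by
  rw [← mean_const (ι := I k) r'.w, BlockSystem.blockMean, ← mean_sub]
  refine norm_mean_le fun j => ?_
  have diff : r.f (S.x k j) * r'.g (S.y k j) - r'.w =
      (r.f (S.x k j) - r'.f (S.x k j)) * r'.g (S.y k j) := by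
    rw [sub_mul, r'.f_mul_g, S.pairing_self, one_smul]
  rw [crossMul_apply, diff]
  refine (norm_mul_le _ _).trans ?_
  gcongr
  exacts [(norm_nonneg _).trans (hf j), hf j, r'.g.unit_le_opNorm _ (S.norm_y_le k j)]

theorem norm_w_le {k k₀ : ℕ} {ε : ℝ} (hmem : ∀ j, S.x k j ∈ Z)
    (hann : ∀ j, ∀ z ∈ Z', P z (S.y k j) = 0) (hp : ‖r.p - r'.p‖ ≤ ε)
    (hf : ∀ j, ‖r.f (S.x k₀ j) - r'.f (S.x k₀ j)‖ ≤ ε)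
    (hcauchy : ∀ F : X →L[ℂ] Y →L[ℂ] B, ‖S.blockMean F k - S.blockMean F k₀‖ ≤ ε * ‖F‖) :
    ‖r'.w‖ ≤ ε * (‖r.q‖ * ‖r'.g‖ + ‖r.f‖ * ‖r'.g‖ + ‖r'.g‖) := by
  have hε : 0 ≤ ε := (norm_nonneg _).trans hp
  let M := S.blockMean (r.crossMul r')
  calc ‖r'.w‖ = ‖M k - (M k - M k₀) - (M k₀ - r'.w)‖ := by congr 1; abel
    _ ≤ ‖M k‖ + ‖M k - M k₀‖ + ‖M k₀ - r'.w‖ := by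
      grw [norm_sub_le, norm_sub_le]
    _ ≤ ‖r.q‖ * ε * ‖r'.g‖ + ε * (‖r.f‖ * ‖r'.g‖) + ε * ‖r'.g‖ := by
      gcongr
      · exact (r.norm_blockMean_crossMul_le S r' hmem hann).trans (by gcongr)
      · exact (hcauchy _).trans (by gcongr; exact r.norm_crossMul_le r')
      · exact r.norm_blockMean_crossMul_sub_w_le S r' hf
    _ = _ := by ring

theorem not_close {k k₀ : ℕ} {M : ℝ} (hr : r.size ≤ M) (hr' : r'.size ≤ M)
    (hmem : ∀ j, S.x k j ∈ Z) (hann : ∀ j, ∀ z ∈ Z', P z (S.y k j) = 0)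
    (hp : ‖r.p - r'.p‖ ≤ 1 / (4 * M ^ 3))
    (hf : ∀ j, ‖r.f (S.x k₀ j) - r'.f (S.x k₀ j)‖ ≤ 1 / (4 * M ^ 3))
    (hcauchy : ∀ F : X →L[ℂ] Y →L[ℂ] B,
      ‖S.blockMean F k - S.blockMean F k₀‖ ≤ 1 / (4 * M ^ 3) * ‖F‖) : False := by
  obtain ⟨hM, hf_le, -, hq_le, -⟩ := size_le_iff.1 hr
  obtain ⟨-, -, hg_le, -, hw_le⟩ := size_le_iff.1 hr'
  have upper : ‖r'.w‖ ≤ 1 / (4 * M ^ 3) * (M * M + M * M + M * M) := by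
    refine (norm_w_le S r r' hmem hann hp hf hcauchy).trans ?_
    gcongr
    exact hg_le.trans (le_mul_of_one_le_left (by positivity) hM)
  have lower : M⁻¹ ≤ ‖r'.w‖ := inv_le_of_inv_le₀ (norm_pos_iff.2 r'.w_ne_zero) hw_le
  have gap : 1 / (4 * M ^ 3) * (M * M + M * M + M * M) < M⁻¹ := by
    field_simp
    norm_num
  exact (upper.trans_lt gap).not_ge lower

end BlockSystem

end PairingRealization

theorem BlockSystem.exists_isEmpty_pairingRealization {X Y B : Type*} [NormedAddCommGroup X]
    [NormedSpace ℂ X] [NormedAddCommGroup Y] [NormedSpace ℂ Y] [NonUnitalNormedRing B]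
    [NormedSpace ℂ B] [IsScalarTower ℂ B B] [SMulCommClass ℂ B B] [SeparableSpace B]
    {P : X →L[ℂ] Y →L[ℂ] ℂ} {I : ℕ → Type*} [∀ k, Fintype (I k)] [∀ k, Nonempty (I k)]
    (S : BlockSystem P I) (hS : S.BlockMeanCauchy B) :
    ∃ t, IsEmpty (PairingRealization P (S.blockSpan t) B) := by
  by_contra! h
  let r (t : Set ℕ) : PairingRealization P (S.blockSpan t) B := (h t).some
  obtain ⟨n, hn, hpair⟩ := exists_nat_forall_exists_dist_lt fun t => (r t).size
  have hε : 0 < 1 / (4 * (n : ℝ) ^ 3) := by positivity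
  obtain ⟨k₀, hk₀⟩ := hS _ hε
  obtain ⟨s, t, hs, ht, hdist, k, hk, hks, hkt⟩ :=
    hpair (fun t => ((r t).p, fun j => (r t).f (S.x k₀ j))) k₀ hε
  rw [Prod.dist_eq, max_lt_iff, dist_pi_lt_iff hε] at hdist
  simp only [dist_eq_norm] at hdist
  exact (r s).not_close S (r t) hs ht (S.x_mem_blockSpan hks)
    (fun j _ => S.pairing_eq_zero_of_mem_blockSpan hkt j) hdist.1.le (fun j => (hdist.2 j).le)
    (hk₀ k hk)

section DavieSystem

/-- The combinatorial input of Davie's construction of a Banach space without the approximation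
property. The rows of the unimodular matrices `σ k` and `τ k` are all orthogonal to one another;
their column correlations nearly agree, and the columns of `σ (k + 1)` are nearly orthogonal to
those of `τ k`. -/
structure DavieSystem (I G : ℕ → Type*) [∀ k, Fintype (I k)] [∀ k, Fintype (G k)] where
  σ : ∀ k, I k → G k → ℂ
  τ : ∀ k, I (k + 1) → G k → ℂ
  δ : ℕ → ℝ
  norm_σ : ∀ k j γ, ‖σ k j γ‖ = 1
  norm_τ : ∀ k j γ, ‖τ k j γ‖ = 1
  sum_conj_σ_mul_σ : ∀ k i j, i ≠ j → ∑ γ, conj (σ k i γ) * σ k j γ = 0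
  sum_conj_τ_mul_τ : ∀ k i j, i ≠ j → ∑ γ, conj (τ k i γ) * τ k j γ = 0
  sum_conj_σ_mul_τ : ∀ k i j, ∑ γ, conj (σ k i γ) * τ k j γ = 0
  summable_δ : Summable δ
  antitone_δ : Antitone δ
  norm_kernel_sub_le : ∀ k γ γ',
    ‖mean (fun j => conj (τ k j γ) * τ k j γ') - mean (fun j => conj (σ k j γ) * σ k j γ')‖ ≤ δ k
  norm_cross_le : ∀ k γ γ',
    ‖mean fun j => conj (σ (k + 1) j γ) * τ k j γ'‖ ≤ δ (k + 1)

variable {I G : ℕ → Type*} [∀ k, Fintype (I k)] [∀ k, Fintype (G k)]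

theorem DavieSystem.norm_cross_swap_le (D : DavieSystem I G) (k : ℕ) (γ : G k) (γ' : G (k + 1)) :
    ‖mean fun j => conj (D.τ k j γ) * D.σ (k + 1) j γ'‖ ≤ D.δ (k + 1) := by
  simpa [← mean_conj, mul_comm] using
    (Complex.norm_conj (mean fun j => conj (D.σ (k + 1) j γ') * D.τ k j γ)).trans_le
      (D.norm_cross_le k γ' γ)

theorem DavieSystem.δ_nonneg (D : DavieSystem I G) (k : ℕ) (γ : G k) : 0 ≤ D.δ k :=
  (norm_nonneg _).trans (D.norm_kernel_sub_le k γ γ)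

/-- A pairing whose left space carries the norm given by coordinate functionals `d l γ`, and in
which the coordinates of the vector `x k j` are `σ k j` at level `k` and `τ (k - 1) j` at level
`k - 1`. -/
structure DaviePairing (D : DavieSystem I G) {X Y : Type*} [NormedAddCommGroup X]
    [NormedSpace ℂ X] [NormedAddCommGroup Y] [NormedSpace ℂ Y] (P : X →L[ℂ] Y →L[ℂ] ℂ) where
  x : ∀ k, I k → X
  d : ∀ l, G l → Y
  norm_d_le : ∀ l γ, ‖d l γ‖ ≤ 1
  norm_le_of_forall_pairing_le : ∀ v r, (∀ l γ, ‖P v (d l γ)‖ ≤ r) → ‖v‖ ≤ r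
  pairing_self : ∀ k j γ, P (x k j) (d k γ) = D.σ k j γ
  pairing_succ : ∀ k j γ, P (x (k + 1) j) (d k γ) = D.τ k j γ
  pairing_of_ne : ∀ k l, l ≠ k → l + 1 ≠ k → ∀ j γ, P (x k j) (d l γ) = 0
  ext_of_pairing : ∀ y y', (∀ k j, P (x k j) y = P (x k j) y') → y = y'

namespace DaviePairing

variable {D : DavieSystem I G} {X Y : Type*} [NormedAddCommGroup X] [NormedSpace ℂ X]
  [NormedAddCommGroup Y] [NormedSpace ℂ Y] {P : X →L[ℂ] Y →L[ℂ] ℂ} (𝓓 : DaviePairing D P)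
  {E : Type*} [NormedAddCommGroup E] [NormedSpace ℂ E]

/-- The functionals biorthogonal to the vectors `x k j`. -/
noncomputable def y (k : ℕ) (j : I k) : Y := mean fun γ => conj (D.σ k j γ) • 𝓓.d k γ

theorem pairing_y (v : X) (k : ℕ) (j : I k) :
    P v (𝓓.y k j) = mean fun γ => conj (D.σ k j γ) * P v (𝓓.d k γ) := by
  simp [y, map_mean]

theorem pairing_y_of_ne_block {k l : ℕ} (h : k ≠ l) (i : I k) (j : I l) :
    P (𝓓.x k i) (𝓓.y l j) = 0 := by
  rw [pairing_y]
  apply mean_eq_zero_of_sum_eq_zero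
  obtain rfl | hl := eq_or_ne k (l + 1)
  · simpa only [𝓓.pairing_succ] using D.sum_conj_σ_mul_τ l j i
  · simp [𝓓.pairing_of_ne k l h.symm hl.symm]

theorem pairing_y_of_ne {k : ℕ} {i j : I k} (h : i ≠ j) : P (𝓓.x k i) (𝓓.y k j) = 0 := by
  simp only [pairing_y, 𝓓.pairing_self]
  exact mean_eq_zero_of_sum_eq_zero (D.sum_conj_σ_mul_σ k j i h.symm)

theorem norm_x_le (k : ℕ) (j : I k) : ‖𝓓.x k j‖ ≤ 1 := by
  refine 𝓓.norm_le_of_forall_pairing_le _ _ fun l γ => ?_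
  obtain rfl | h := eq_or_ne l k
  · rw [𝓓.pairing_self, D.norm_σ]
  obtain rfl | h' := eq_or_ne (l + 1) k
  · rw [𝓓.pairing_succ, D.norm_τ]
  · simp [𝓓.pairing_of_ne k l h h']

/-- The vectors with `blockMean F (k + 1) - blockMean F k = mean fun γ => F (increment k γ) (d k γ)`
for every bilinear map `F`. -/
noncomputable def increment (k : ℕ) (γ : G k) : X :=
  mean (fun j => conj (D.τ k j γ) • 𝓓.x (k + 1) j) - mean fun j => conj (D.σ k j γ) • 𝓓.x k j

theorem pairing_increment (k l : ℕ) (γ : G k) (γ' : G l) :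
    P (𝓓.increment k γ) (𝓓.d l γ') =
      mean (fun j => conj (D.τ k j γ) * P (𝓓.x (k + 1) j) (𝓓.d l γ')) -
        mean fun j => conj (D.σ k j γ) * P (𝓓.x k j) (𝓓.d l γ') := by
  rw [← flip_apply, increment, map_sub, map_mean, map_mean]
  simp only [flip_apply, map_smul, smul_eq_mul]

theorem norm_increment_le [∀ k, Nonempty (I k)] (k : ℕ) (γ : G k) : ‖𝓓.increment k γ‖ ≤ D.δ k := by
  refine 𝓓.norm_le_of_forall_pairing_le _ _ fun l γ' => ?_
  rw [pairing_increment]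
  obtain rfl | hk := eq_or_ne l k
  · simpa only [𝓓.pairing_succ, 𝓓.pairing_self] using D.norm_kernel_sub_le l γ γ'
  obtain rfl | hk' := eq_or_ne l (k + 1)
  · have above (j : I k) : P (𝓓.x k j) (𝓓.d (k + 1) γ') = 0 :=
      𝓓.pairing_of_ne k (k + 1) (by lia) (by lia) j γ'
    simp only [𝓓.pairing_self, above, mul_zero, mean_const, sub_zero]
    exact (D.norm_cross_swap_le k γ γ').trans (D.antitone_δ k.le_succ)
  have two_levels (j : I (k + 1)) : P (𝓓.x (k + 1) j) (𝓓.d l γ') = 0 :=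
    𝓓.pairing_of_ne (k + 1) l hk' (by lia) j γ'
  simp only [two_levels, mul_zero, mean_const, zero_sub, norm_neg]
  obtain rfl | hl := eq_or_ne (l + 1) k
  · simpa only [𝓓.pairing_succ] using D.norm_cross_le l γ γ'
  · have far (j : I k) : P (𝓓.x k j) (𝓓.d l γ') = 0 := 𝓓.pairing_of_ne k l hk hl j γ'
    simpa only [far, mul_zero, mean_const, norm_zero] using D.δ_nonneg k γ

variable [∀ k, Nonempty (G k)]

theorem pairing_y_self (k : ℕ) (j : I k) : P (𝓓.x k j) (𝓓.y k j) = 1 := by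
  simp only [pairing_y, 𝓓.pairing_self]
  exact mean_conj_mul_self (D.norm_σ k j)

/-- Both sides are biorthogonal to the vectors `x l i`. -/
theorem y_succ (k : ℕ) (j : I (k + 1)) :
    𝓓.y (k + 1) j = mean fun γ => conj (D.τ k j γ) • 𝓓.d k γ := by
  refine 𝓓.ext_of_pairing _ _ fun l i => ?_
  have expand : P (𝓓.x l i) (mean fun γ => conj (D.τ k j γ) • 𝓓.d k γ) =
      mean fun γ => conj (D.τ k j γ) * P (𝓓.x l i) (𝓓.d k γ) := by simp [map_mean]
  rw [expand]
  obtain rfl | hl := eq_or_ne l (k + 1)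
  · simp only [𝓓.pairing_succ]
    obtain rfl | hij := eq_or_ne i j
    · rw [𝓓.pairing_y_self, mean_conj_mul_self (D.norm_τ k i)]
    · rw [𝓓.pairing_y_of_ne hij, mean_eq_zero_of_sum_eq_zero (D.sum_conj_τ_mul_τ k j i hij.symm)]
  · rw [𝓓.pairing_y_of_ne_block hl, mean_eq_zero_of_sum_eq_zero]
    obtain rfl | hk := eq_or_ne l k
    · simpa [𝓓.pairing_self, mul_comm] using congrArg conj (D.sum_conj_σ_mul_τ l i j)
    · simp [𝓓.pairing_of_ne l k hk.symm hl.symm]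

theorem norm_y_le (k : ℕ) (j : I k) : ‖𝓓.y k j‖ ≤ 1 :=
  norm_mean_le fun γ => by simpa [norm_smul, D.norm_σ] using 𝓓.norm_d_le k γ

/-- The vectors `x k j` and their biorthogonal functionals. -/
noncomputable def blockSystem : BlockSystem P I where
  x := 𝓓.x
  y := 𝓓.y
  norm_x_le := 𝓓.norm_x_le
  norm_y_le := 𝓓.norm_y_le
  pairing_self := 𝓓.pairing_y_self
  pairing_of_ne := fun _ _ => 𝓓.pairing_y_of_ne_block

theorem blockMean_succ_sub (F : X →L[ℂ] Y →L[ℂ] E) (k : ℕ) :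
    𝓓.blockSystem.blockMean F (k + 1) - 𝓓.blockSystem.blockMean F k =
      mean fun γ => F (𝓓.increment k γ) (𝓓.d k γ) := by
  simp only [increment, map_sub, sub_apply, mean_sub, ← mean_apply_mean, ← y_succ]
  rfl

theorem blockMeanCauchy [∀ k, Nonempty (I k)] : 𝓓.blockSystem.BlockMeanCauchy E := by
  intro ε hε
  obtain ⟨k₀, hk₀⟩ := Metric.cauchySeq_iff'.1 D.summable_δ.hasSum.tendsto_sum_nat.cauchySeq ε hε
  refine ⟨k₀, fun k hk F => ?_⟩
  have step (n : ℕ) : dist (𝓓.blockSystem.blockMean F n) (𝓓.blockSystem.blockMean F (n + 1)) ≤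
      D.δ n * ‖F‖ := by
    rw [dist_comm, dist_eq_norm, blockMean_succ_sub]
    refine norm_mean_le fun γ => (F.le_opNorm₂ _ _).trans ?_
    grw [𝓓.norm_d_le, 𝓓.norm_increment_le, mul_one, mul_comm]
  rw [← dist_eq_norm, dist_comm]
  calc _ ≤ ∑ n ∈ Finset.Ico k₀ k, D.δ n * ‖F‖ := dist_le_Ico_sum_of_dist_le hk fun _ _ => step _
    _ = (∑ n ∈ Finset.range k, D.δ n - ∑ n ∈ Finset.range k₀, D.δ n) * ‖F‖ := by
      rw [← Finset.sum_mul, Finset.sum_Ico_eq_sub _ hk]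
    _ ≤ ε * ‖F‖ := by
      gcongr
      exact (le_abs_self _).trans (hk₀ k hk).le

end DaviePairing

end DavieSystem

section ClosedSpan

variable {E ι κ : Type*} [NormedAddCommGroup E] [NormedSpace ℂ E]

/-- The closed linear span of a family of vectors. -/
def closedSpan (v : ι → E) : Submodule ℂ E := (Submodule.span ℂ (Set.range v)).topologicalClosure

/-- A vector of the family, as an element of its closed linear span. -/
def closedSpan.of (v : ι → E) (i : ι) : closedSpan v :=
  ⟨v i, Submodule.le_topologicalClosure _ (Submodule.subset_span (Set.mem_range_self i))⟩

instance [Countable ι] (v : ι → E) : SeparableSpace (closedSpan v) :=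
  separableSpace_topologicalClosure (Set.countable_range v).isSeparable.span

instance [CompleteSpace E] (v : ι → E) : CompleteSpace (closedSpan v) :=
  (Submodule.isClosed_topologicalClosure _).completeSpace_coe

theorem closedSpan.dense_span_range_of (v : ι → E) :
    Dense (Submodule.span ℂ (Set.range (closedSpan.of v)) : Set (closedSpan v)) := by
  have map_span : (Submodule.span ℂ (Set.range (closedSpan.of v))).map (closedSpan v).subtype =
      Submodule.span ℂ (Set.range v) := by
    rw [Submodule.map_span, ← Set.range_comp]
    rfl
  refine Subtype.dense_iff.2 fun z hz => ?_
  change z ∈ closure (Submodule.map (closedSpan v).subtype _ : Set E)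
  rwa [map_span]

/-- A family of functionals on `E`, restricted to the closed linear span of `v`. -/
noncomputable def restrictClosedSpan (v : ι → E) (φ : κ → E →L[ℂ] ℂ) (i : κ) :
    closedSpan v →L[ℂ] ℂ :=
  φ i ∘L (closedSpan v).subtypeL

/-- The evaluation pairing between the closed linear span of the vectors `v` and that of the
functionals `φ` restricted to it. -/
noncomputable def closedSpanPairing (v : ι → E) (φ : κ → E →L[ℂ] ℂ) :
    closedSpan v →L[ℂ] closedSpan (restrictClosedSpan v φ) →L[ℂ] ℂ :=
  (closedSpan (restrictClosedSpan v φ)).subtypeL.flip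

theorem norm_restrictClosedSpan_le (v : ι → E) (φ : κ → E →L[ℂ] ℂ) (i : κ) :
    ‖restrictClosedSpan v φ i‖ ≤ ‖φ i‖ :=
  opNorm_le_bound _ (norm_nonneg _) fun z => (φ i).le_opNorm z

theorem closedSpanPairing_ext {v : ι → E} {φ : κ → E →L[ℂ] ℂ}
    {y y' : closedSpan (restrictClosedSpan v φ)}
    (h : ∀ i, closedSpanPairing v φ (closedSpan.of v i) y =
      closedSpanPairing v φ (closedSpan.of v i) y') : y = y' :=
  Subtype.ext <| ContinuousLinearMap.ext_on (closedSpan.dense_span_range_of v) <|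
    Set.forall_mem_range.2 h

end ClosedSpan

section Coordinates

/-- The evaluation functionals on the space of bounded families of coordinates. -/
noncomputable def evalCoord {α : Type*} (γ : α) : lp (fun _ : α => ℂ) ⊤ →L[ℂ] ℂ :=
  lp.evalCLM ℂ (fun _ : α => ℂ) ⊤ γ

theorem norm_evalCoord_le {α : Type*} (γ : α) : ‖evalCoord γ‖ ≤ 1 :=
  opNorm_le_bound _ zero_le_one fun z => by
    rw [one_mul]
    exact lp.norm_apply_le_norm ENNReal.top_ne_zero z γ

namespace DavieSystem

variable {I G : ℕ → Type*} [∀ k, Fintype (I k)] [∀ k, Fintype (G k)] (D : DavieSystem I G)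

/-- The coordinates at level `l` of the vector `x k j`. -/
noncomputable def coord (k : ℕ) (j : I k) (l : ℕ) (γ : G l) : ℂ :=
  if hk : l = k then D.σ k j (hk ▸ γ) else if hl : l + 1 = k then D.τ l (hl ▸ j) γ else 0

theorem coord_self (k : ℕ) (j : I k) (γ : G k) : D.coord k j k γ = D.σ k j γ := by
  simp [coord]

theorem coord_succ (k : ℕ) (j : I (k + 1)) (γ : G k) : D.coord (k + 1) j k γ = D.τ k j γ := by
  simp [coord]

theorem coord_of_ne {k l : ℕ} (hk : l ≠ k) (hl : l + 1 ≠ k) (j : I k) (γ : G l) :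
    D.coord k j l γ = 0 := by
  simp [coord, hk, hl]

theorem norm_coord_le (k : ℕ) (j : I k) (l : ℕ) (γ : G l) : ‖D.coord k j l γ‖ ≤ 1 := by
  obtain rfl | hk := eq_or_ne l k
  · rw [coord_self, D.norm_σ]
  obtain rfl | hl := eq_or_ne (l + 1) k
  · rw [coord_succ, D.norm_τ]
  · simp [D.coord_of_ne hk hl]

/-- The bounded family of all coordinates of the vector `x i.1 i.2`. -/
noncomputable def coordVec (i : Σ k, I k) : lp (fun _ : Σ l, G l => ℂ) ⊤ :=
  ⟨fun γ => D.coord i.1 i.2 γ.1 γ.2,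
    memℓp_infty ⟨1, Set.forall_mem_range.2 fun γ => D.norm_coord_le i.1 i.2 γ.1 γ.2⟩⟩

/-- The vectors with the prescribed coordinates span the left space, and the coordinate functionals
span the right space. -/
noncomputable def daviePairing [∀ l, Nonempty (G l)] :
    DaviePairing D (closedSpanPairing D.coordVec evalCoord) where
  x k j := closedSpan.of D.coordVec ⟨k, j⟩
  d l γ := closedSpan.of (restrictClosedSpan D.coordVec evalCoord) ⟨l, γ⟩
  norm_d_le _ _ := (norm_restrictClosedSpan_le _ _ _).trans (norm_evalCoord_le _)
  norm_le_of_forall_pairing_le _ r h := lp.norm_le_of_forall_le' r fun γ => h γ.1 γ.2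
  pairing_self := D.coord_self
  pairing_succ := D.coord_succ
  pairing_of_ne _ _ hk hl := D.coord_of_ne hk hl
  ext_of_pairing _ _ h := closedSpanPairing_ext fun i => h i.1 i.2

end DavieSystem

end Coordinates

theorem DavieSystem.exists_comm_sepBanachAlgebra_not_exists_injective {I G : ℕ → Type}
    [∀ k, Fintype (I k)] [∀ k, Fintype (G k)] [∀ k, Nonempty (I k)] [∀ k, Nonempty (G k)]
    (D : DavieSystem I G) (B : Type*) [NonUnitalNormedRing B] [NormedSpace ℂ B]
    [IsScalarTower ℂ B B] [SMulCommClass ℂ B B] [SeparableSpace B] :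
    ∃ A : SepBanachAlgebra, (∀ x y : A.carrier, x * y = y * x) ∧
      ¬ ∃ φ : A.carrier →ₙₐ[ℂ] B, Function.Injective φ ∧ ∃ C : ℝ, ∀ a, ‖φ a‖ ≤ C * ‖a‖ := by
  obtain ⟨t, ht⟩ := D.daviePairing.blockSystem.exists_isEmpty_pairingRealization
    (D.daviePairing.blockMeanCauchy (E := B))
  obtain ⟨A, comm, ⟨r⟩⟩ :=
    exists_comm_pairingRealization (closedSpanPairing D.coordVec evalCoord)
      (D.daviePairing.blockSystem.isClosed_blockSpan t)
  exact ⟨A, comm, fun ⟨φ, inj, bdd⟩ => ht.false (r.map φ inj bdd)⟩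

section FiniteMeans

variable {ι κ : Type*} [Fintype ι] [Fintype κ]

theorem mean_comp_equiv {E : Type*} [NormedAddCommGroup E] [NormedSpace ℂ E] (e : ι ≃ κ)
    (v : κ → E) : (mean fun j => v (e j)) = mean v := by
  rw [mean, mean, e.sum_comp, Fintype.card_congr e]

theorem mean_prod_mul (v : ι → ℂ) (w : κ → ℂ) :
    (mean fun p : ι × κ => v p.1 * w p.2) = mean v * mean w := by
  simp only [mean, Fintype.card_prod, Nat.cast_mul, mul_inv, smul_eq_mul, Fintype.sum_prod_type,
    ← Finset.mul_sum, ← Finset.sum_mul]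
  ring

theorem norm_mean_sq (v : ι → ℂ) : ‖mean v‖ ^ 2 = ‖∑ j, v j‖ ^ 2 / Fintype.card ι ^ 2 := by
  rw [mean, norm_smul, norm_inv, Complex.norm_natCast, mul_pow, inv_pow, inv_mul_eq_div]

end FiniteMeans

section PrimitiveCharacter

variable {R : Type*} [CommRing R] {ψ : AddChar R ℂ}

theorem conj_addChar_mul [Finite R] (a b : R) : conj (ψ a) * ψ b = ψ (b - a) := by
  rw [← AddChar.map_neg_eq_conj, ← AddChar.map_add_eq_mul, neg_add_eq_sub]

variable [Fintype R]

theorem sum_addChar_mul_eq_zero (hψ : ψ.IsPrimitive) {t : R} (ht : t ≠ 0) :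
    ∑ b, ψ (b * t) = 0 := by
  classical simpa [ht] using AddChar.sum_mulShift t hψ

/-- Substitute `u = h + w` in the squared modulus of the Gauss sum; the sum over `w` then
vanishes unless `2 * α * h = 0`. -/
theorem norm_mean_addChar_quadratic_sq_le [DecidableEq R] (hψ : ψ.IsPrimitive) (α β : R) :
    ‖mean fun u => ψ (α * u ^ 2 + β * u)‖ ^ 2 ≤
      (Finset.univ.filter fun h : R => 2 * α * h = 0).card / Fintype.card R := by
  set S := ∑ u, ψ (α * u ^ 2 + β * u) with hS
  have shift (w : R) : conj (ψ (α * w ^ 2 + β * w)) * S =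
      ∑ h, ψ (α * h ^ 2 + β * h) * ψ (w * (2 * α * h)) := by
    rw [hS, ← Equiv.sum_comp (Equiv.addRight w), Finset.mul_sum]
    refine Finset.sum_congr rfl fun h _ => ?_
    rw [conj_addChar_mul, ← AddChar.map_add_eq_mul, Equiv.coe_addRight]
    congr 1
    ring
  have expand : (‖S‖ : ℂ) ^ 2 = ∑ h, ψ (α * h ^ 2 + β * h) *
      if 2 * α * h = 0 then (Fintype.card R : ℂ) else 0 := by
    rw [← Complex.conj_mul', hS, map_sum, Finset.sum_mul, ← hS]
    simp only [shift]
    rw [Finset.sum_comm]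
    simp only [← Finset.mul_sum, AddChar.sum_mulShift _ hψ, Nat.cast_ite, Nat.cast_zero]
  have bound : ‖S‖ ^ 2 ≤
      (Finset.univ.filter fun h : R => 2 * α * h = 0).card * (Fintype.card R : ℝ) :=
    calc ‖S‖ ^ 2 = ‖(‖S‖ : ℂ) ^ 2‖ := by simp
      _ ≤ ∑ h : R, if 2 * α * h = 0 then (Fintype.card R : ℝ) else 0 := by
        rw [expand]
        refine norm_sum_le_of_le _ fun h _ => ?_
        rw [norm_mul, AddChar.norm_apply, one_mul]
        split_ifs <;> simp
      _ = _ := by rw [← Finset.sum_filter, Finset.sum_const, nsmul_eq_mul]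
  rw [norm_mean_sq, div_le_div_iff₀ (by positivity) (by positivity)]
  nlinarith [Nat.cast_nonneg (α := ℝ) (Fintype.card R)]

theorem sum_norm_sq_sum_addChar_mul (hψ : ψ.IsPrimitive) (H : R → ℂ) :
    ∑ u, ‖∑ v, ψ (u * v) * H v‖ ^ 2 = Fintype.card R * ∑ v, ‖H v‖ ^ 2 := by
  classical
  have expand (u : R) : (‖∑ v, ψ (u * v) * H v‖ : ℂ) ^ 2 =
      ∑ w, ∑ v, conj (H w) * H v * ψ (u * (v - w)) := by
    simp only [← Complex.conj_mul', map_sum, Finset.sum_mul_sum, mul_sub, ← conj_addChar_mul,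
      map_mul]
    exact Finset.sum_congr rfl fun w _ => Finset.sum_congr rfl fun v _ => by ring
  have orthogonality (w v : R) : ∑ u, conj (H w) * H v * ψ (u * (v - w)) =
      if v = w then (Fintype.card R : ℂ) * ‖H v‖ ^ 2 else 0 := by
    rw [← Finset.mul_sum, AddChar.sum_mulShift _ hψ]
    split_ifs with h₀ h h
    · rw [h, Complex.conj_mul', mul_comm]
    · exact absurd (sub_eq_zero.1 h₀) h
    · exact absurd (sub_eq_zero.2 h) h₀
    · simp
  suffices h : ∑ u, (‖∑ v, ψ (u * v) * H v‖ : ℂ) ^ 2 =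
      Fintype.card R * ∑ v, (‖H v‖ : ℂ) ^ 2 by exact_mod_cast h
  simp only [expand]
  rw [Finset.sum_comm, Finset.mul_sum]
  refine Finset.sum_congr rfl fun w _ => ?_
  rw [Finset.sum_comm]
  simp only [orthogonality, Finset.sum_ite_eq', Finset.mem_univ, if_true]

theorem norm_mean_addChar_mul_sq_le (hψ : ψ.IsPrimitive) {F H : R → ℂ} (hF : ∀ u, ‖F u‖ = 1)
    (hH : ∀ v, ‖H v‖ = 1) :
    ‖mean fun j : R × R => ψ (j.1 * j.2) * (F j.1 * H j.2)‖ ^ 2 ≤ 1 / Fintype.card R := by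
  have factor : ∑ j : R × R, ψ (j.1 * j.2) * (F j.1 * H j.2) =
      ∑ u, F u * ∑ v, ψ (u * v) * H v := by
    simp only [Fintype.sum_prod_type, Finset.mul_sum]
    exact Finset.sum_congr rfl fun u _ => Finset.sum_congr rfl fun v _ => by ring
  have bound : ‖∑ j : R × R, ψ (j.1 * j.2) * (F j.1 * H j.2)‖ ^ 2 ≤ (Fintype.card R : ℝ) ^ 3 :=
    calc _ ≤ (∑ u, 1 * ‖∑ v, ψ (u * v) * H v‖) ^ 2 := by
          rw [factor]
          gcongr
          refine norm_sum_le_of_le _ fun u _ => ?_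
          rw [norm_mul, hF]
      _ ≤ (∑ _u : R, (1 : ℝ) ^ 2) * ∑ u, ‖∑ v, ψ (u * v) * H v‖ ^ 2 :=
        Finset.sum_mul_sq_le_sq_mul_sq _ _ _
      _ = (Fintype.card R : ℝ) ^ 3 := by
        simp only [sum_norm_sq_sum_addChar_mul hψ, hH, one_pow, Finset.sum_const,
          Finset.card_univ, nsmul_eq_mul, mul_one]
        ring
  have hcard : (0 : ℝ) < Fintype.card R := by exact_mod_cast Fintype.card_pos
  rw [norm_mean_sq, Fintype.card_prod, div_le_div_iff₀ (by positivity) hcard]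
  push_cast
  calc _ ≤ (Fintype.card R : ℝ) ^ 3 * Fintype.card R := by gcongr
    _ = _ := by ring

end PrimitiveCharacter

section Chirp

variable {L R : Type*} [CommRing L] [CommRing R] {χ : AddChar L ℂ}
  {ψ : AddChar R ℂ} {m : L → R}

/-- The function `(a, b, c) ↦ χ (l * a) * ψ (m a * u ^ 2 + b * u + c * v)`, indexed by the triple
`(l, u, v)`. -/
noncomputable def chirp (χ : AddChar L ℂ) (ψ : AddChar R ℂ) (m : L → R) (i g : L × R × R) : ℂ :=
  χ (i.1 * g.1) * ψ (m g.1 * i.2.1 ^ 2 + g.2.1 * i.2.1 + g.2.2 * i.2.2)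

theorem chirp_eq_mul_chirp_zero (l : L) (i : R × R) (g : L × R × R) :
    chirp χ ψ m (l, i) g = χ (l * g.1) * chirp χ ψ m (0, i) g := by
  simp [chirp]

theorem conj_chirp_zero_mul_chirp_zero [Finite R] (i : R × R) (g h : L × R × R) :
    conj (chirp χ ψ m (0, i) g) * chirp χ ψ m (0, i) h =
      ψ ((m h.1 - m g.1) * i.1 ^ 2 + (h.2.1 - g.2.1) * i.1) * ψ ((h.2.2 - g.2.2) * i.2) := by
  simp only [chirp, zero_mul, AddChar.map_zero_eq_one, one_mul]
  rw [conj_addChar_mul, ← AddChar.map_add_eq_mul]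
  congr 1
  ring

theorem norm_mean_conj_chirp_zero_mul_sq_le [Fintype R] [DecidableEq R] (hψ : ψ.IsPrimitive)
    (g h : L × R × R) :
    ‖mean fun i : R × R => conj (chirp χ ψ m (0, i) g) * chirp χ ψ m (0, i) h‖ ^ 2 ≤
      (Finset.univ.filter fun u : R => 2 * (m h.1 - m g.1) * u = 0).card / Fintype.card R := by
  simp only [conj_chirp_zero_mul_chirp_zero]
  rw [mean_prod_mul (fun u => ψ ((m h.1 - m g.1) * u ^ 2 + (h.2.1 - g.2.1) * u))
    fun v => ψ ((h.2.2 - g.2.2) * v), norm_mul, mul_pow]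
  refine (mul_le_of_le_one_right (sq_nonneg _) ?_).trans (norm_mean_addChar_quadratic_sq_le hψ _ _)
  exact pow_le_one₀ (norm_nonneg _) (norm_mean_le fun v => (AddChar.norm_apply ψ _).le)

theorem norm_chirp [Finite L] [Finite R] (i g : L × R × R) : ‖chirp χ ψ m i g‖ = 1 := by
  simp [chirp]

theorem conj_chirp_mul_chirp_eq_mul [Finite L] [Finite R] (i j g : L × R × R) :
    conj (chirp χ ψ m i g) * chirp χ ψ m j g =
      χ (g.1 * (j.1 - i.1)) * ψ (m g.1 * (j.2.1 ^ 2 - i.2.1 ^ 2)) *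
        (ψ (g.2.1 * (j.2.1 - i.2.1)) * ψ (g.2.2 * (j.2.2 - i.2.2))) := by
  rw [chirp, chirp, map_mul, mul_mul_mul_comm, conj_addChar_mul, conj_addChar_mul, mul_assoc,
    ← AddChar.map_add_eq_mul, ← AddChar.map_add_eq_mul]
  congr 2 <;> ring

theorem sum_conj_chirp_mul_chirp [Fintype L] [Fintype R] (hχ : χ.IsPrimitive) (hψ : ψ.IsPrimitive)
    {i j : L × R × R} (h : i ≠ j) : ∑ g, conj (chirp χ ψ m i g) * chirp χ ψ m j g = 0 := by
  simp only [conj_chirp_mul_chirp_eq_mul, Fintype.sum_prod_type, ← Finset.mul_sum,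
    ← Finset.sum_mul]
  by_cases hv : j.2.2 = i.2.2
  swap
  · simp [sum_addChar_mul_eq_zero hψ (sub_ne_zero.2 hv)]
  by_cases hu : j.2.1 = i.2.1
  swap
  · simp [sum_addChar_mul_eq_zero hψ (sub_ne_zero.2 hu)]
  have hl : j.1 ≠ i.1 := fun hl => h (Prod.ext hl.symm (Prod.ext hu.symm hv.symm))
  simp [hu, sum_addChar_mul_eq_zero hχ (sub_ne_zero.2 hl)]

end Chirp

section LinkChirp

variable {D L R R' : Type*} {e : R' ≃ D × R} {s t : D → L}

/-- Relabels pairs over the finer ring `R' ≃ D × R` by triples over `R`: the two digits in `D` are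
combined into one element of `L`. -/
def fineLabel [Add L] (e : R' ≃ D × R) (s t : D → L) (j : R' × R') : L × R × R :=
  (s (e j.1).1 + t (e j.2).1, (e j.1).2, (e j.2).2)

theorem fineLabel_injective [Add L]
    (h : Function.Injective fun p : D × D => s p.1 + t p.2) :
    Function.Injective (fineLabel e s t) := by
  rintro ⟨u, v⟩ ⟨u', v'⟩ huv
  simp only [fineLabel, Prod.mk.injEq] at huv
  obtain ⟨hdigits, hu, hv⟩ := huv
  have hdigits : ((e u).1, (e v).1) = ((e u').1, (e v').1) := h hdigits
  rw [Prod.mk.injEq] at hdigits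
  exact Prod.ext (e.injective (Prod.ext hdigits.1 hu)) (e.injective (Prod.ext hdigits.2 hv))

variable [CommRing L] [CommRing R] [CommRing R'] {χ : AddChar L ℂ} {ψ : AddChar R ℂ}
  {ψ' : AddChar R' ℂ} {m : L → R} {m' : L → R'}

/-- A chirp over `R`, indexed through `fineLabel` by pairs over the finer ring `R'`. The twist by
`ψ' (j.1 * j.2)` makes it nearly orthogonal, on average over `j`, to the chirps over `R'`. -/
noncomputable def linkChirp (χ : AddChar L ℂ) (ψ : AddChar R ℂ) (ψ' : AddChar R' ℂ) (m : L → R)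
    (e : R' ≃ D × R) (s t : D → L) (j : R' × R') (g : L × R × R) : ℂ :=
  ψ' (j.1 * j.2) * chirp χ ψ m (fineLabel e s t j) g

theorem norm_linkChirp [Finite L] [Finite R] [Finite R'] (j : R' × R') (g : L × R × R) :
    ‖linkChirp χ ψ ψ' m e s t j g‖ = 1 := by
  simp [linkChirp, norm_chirp]

section Orthogonality

variable [Fintype L] [Fintype R]

theorem sum_conj_linkChirp_mul_linkChirp (hχ : χ.IsPrimitive) (hψ : ψ.IsPrimitive)
    (hst : Function.Injective fun p : D × D => s p.1 + t p.2) {i j : R' × R'} (h : i ≠ j) :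
    ∑ g, conj (linkChirp χ ψ ψ' m e s t i g) * linkChirp χ ψ ψ' m e s t j g = 0 := by
  simp only [linkChirp, map_mul, mul_mul_mul_comm, ← Finset.mul_sum,
    sum_conj_chirp_mul_chirp hχ hψ ((fineLabel_injective hst).ne h), mul_zero]

theorem sum_conj_chirp_mul_linkChirp (hχ : χ.IsPrimitive) (hψ : ψ.IsPrimitive)
    (hst : ∀ c d, s c + t d ≠ 0) (i : R × R) (j : R' × R') :
    ∑ g, conj (chirp χ ψ m (0, i) g) * linkChirp χ ψ ψ' m e s t j g = 0 := by
  have h : (0, i) ≠ fineLabel e s t j := fun h => hst _ _ (congrArg Prod.fst h).symm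
  simp only [linkChirp, mul_left_comm, ← Finset.mul_sum, sum_conj_chirp_mul_chirp hχ hψ h, mul_zero]

end Orthogonality

theorem conj_linkChirp_mul_linkChirp_eq_mul [Finite L] [Finite R'] (j : R' × R')
    (g h : L × R × R) :
    conj (linkChirp χ ψ ψ' m e s t j g) * linkChirp χ ψ ψ' m e s t j h =
      χ ((s (e j.1).1 + t (e j.2).1) * (h.1 - g.1)) *
        (conj (chirp χ ψ m (0, (e j.1).2, (e j.2).2) g) *
          chirp χ ψ m (0, (e j.1).2, (e j.2).2) h) := by
  have hψ' : conj (ψ' (j.1 * j.2)) * ψ' (j.1 * j.2) = 1 := by simp [conj_addChar_mul]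
  rw [linkChirp, linkChirp, map_mul, mul_mul_mul_comm, hψ', one_mul, fineLabel,
    chirp_eq_mul_chirp_zero, chirp_eq_mul_chirp_zero (χ := χ) (g := h), map_mul, mul_mul_mul_comm,
    conj_addChar_mul, mul_sub]

theorem mean_conj_linkChirp_mul_linkChirp [Fintype D] [Finite L] [Fintype R] [Fintype R']
    (g h : L × R × R) :
    (mean fun j => conj (linkChirp χ ψ ψ' m e s t j g) * linkChirp χ ψ ψ' m e s t j h) =
      (mean fun p : D × D => χ ((s p.1 + t p.2) * (h.1 - g.1))) *
        mean fun i => conj (chirp χ ψ m (0, i) g) * chirp χ ψ m (0, i) h := by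
  simp only [conj_linkChirp_mul_linkChirp_eq_mul]
  rw [← mean_prod_mul, ← mean_comp_equiv ((e.prodCongr e).trans (Equiv.prodProdProdComm D R D R))]
  rfl

theorem norm_mean_linkChirp_sub_mean_chirp_sq_le [Finite D] [Nonempty D] [Finite L] [Fintype R]
    [Fintype R'] [DecidableEq R] (hψ : ψ.IsPrimitive) {n : ℕ} {g h : L × R × R}
    (hn : h.1 ≠ g.1 → (Finset.univ.filter fun u : R => 2 * (m h.1 - m g.1) * u = 0).card ≤ n) :
    ‖mean (fun j => conj (linkChirp χ ψ ψ' m e s t j g) * linkChirp χ ψ ψ' m e s t j h) -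
        mean (fun i => conj (chirp χ ψ m (0, i) g) * chirp χ ψ m (0, i) h)‖ ^ 2 ≤
      4 * n / Fintype.card R := by
  have := Fintype.ofFinite D
  rw [mean_conj_linkChirp_mul_linkChirp, ← sub_one_mul, norm_mul, mul_pow, mul_div_assoc]
  by_cases hgh : h.1 = g.1
  · simp only [hgh, sub_self, mul_zero, AddChar.map_zero_eq_one, mean_const, norm_zero,
      zero_pow two_ne_zero, zero_mul]
    positivity
  have htwist : ‖(mean fun p : D × D => χ ((s p.1 + t p.2) * (h.1 - g.1))) - 1‖ ≤ 2 := by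
    refine (norm_sub_le _ _).trans ?_
    rw [norm_one, ← one_add_one_eq_two]
    gcongr
    exact norm_mean_le fun p => (AddChar.norm_apply χ _).le
  calc _ ≤ (2 : ℝ) ^ 2 *
        ((Finset.univ.filter fun u : R => 2 * (m h.1 - m g.1) * u = 0).card / Fintype.card R) := by
        gcongr
        exact norm_mean_conj_chirp_zero_mul_sq_le hψ g h
    _ ≤ 4 * (n / Fintype.card R) := by
        rw [show (2 : ℝ) ^ 2 = 4 by norm_num]
        gcongr
        exact hn hgh

theorem conj_chirp_mul_linkChirp_eq_mul (j : R' × R') (g : L × R' × R') (h : L × R × R) :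
    conj (chirp χ ψ' m' (0, j) g) * linkChirp χ ψ ψ' m e s t j h =
      ψ' (j.1 * j.2) *
        ((conj (ψ' (m' g.1 * j.1 ^ 2 + g.2.1 * j.1)) * χ (s (e j.1).1 * h.1) *
            ψ (m h.1 * (e j.1).2 ^ 2 + h.2.1 * (e j.1).2)) *
          (conj (ψ' (g.2.2 * j.2)) * χ (t (e j.2).1 * h.1) * ψ (h.2.2 * (e j.2).2))) := by
  simp only [linkChirp, chirp, fineLabel, zero_mul, AddChar.map_zero_eq_one, one_mul,
    AddChar.map_add_eq_mul, map_mul, add_mul]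
  ring

theorem norm_mean_conj_chirp_mul_linkChirp_sq_le [Finite L] [Finite R] [Fintype R']
    (hψ' : ψ'.IsPrimitive) (g : L × R' × R') (h : L × R × R) :
    ‖mean fun j => conj (chirp χ ψ' m' (0, j) g) * linkChirp χ ψ ψ' m e s t j h‖ ^ 2 ≤
      1 / Fintype.card R' := by
  simp only [conj_chirp_mul_linkChirp_eq_mul]
  exact norm_mean_addChar_mul_sq_le hψ'
    (F := fun u => conj (ψ' (m' g.1 * u ^ 2 + g.2.1 * u)) * χ (s (e u).1 * h.1) *
      ψ (m h.1 * (e u).2 ^ 2 + h.2.1 * (e u).2))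
    (H := fun v => conj (ψ' (g.2.2 * v)) * χ (t (e v).1 * h.1) * ψ (h.2.2 * (e v).2))
    (fun u => by simp) fun v => by simp

end LinkChirp

section DyadicSystem

theorem card_zsmul_eq_zero_le {G : Type*} [AddGroup G] [IsAddCyclic G] [Fintype G] [DecidableEq G]
    {n : ℤ} (hn : n ≠ 0) : (Finset.univ.filter fun u : G => n • u = 0).card ≤ n.natAbs := by
  simpa only [natAbs_nsmul_eq_zero] using
    IsAddCyclic.card_nsmul_eq_zero_le (α := G) (Int.natAbs_pos.2 hn)

theorem card_two_mul_val_sub_val_mul_eq_zero_le {N : ℕ} [NeZero N] {p : ℕ} [NeZero p] {a b : ZMod p}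
    (h : b ≠ a) : (Finset.univ.filter fun u : ZMod N =>
      2 * ((b.val : ZMod N) - (a.val : ZMod N)) * u = 0).card ≤ 2 * (p - 1) := by
  have hval : b.val ≠ a.val := (ZMod.val_injective p).ne h
  have hzsmul (u : ZMod N) : 2 * ((b.val : ZMod N) - (a.val : ZMod N)) * u =
      (2 * ((b.val : ℤ) - a.val)) • u := by
    simp [zsmul_eq_mul]
  have ha := a.val_lt
  have hb := b.val_lt
  simp only [hzsmul]
  exact (card_zsmul_eq_zero_le (by lia)).trans (by lia)

theorem le_six_mul_geometric {a : ℝ} {k : ℕ} (h : a ^ 2 ≤ 36 / 2 ^ k) : a ≤ 6 * (3 / 4) ^ k := by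
  refine (le_abs_self a).trans (abs_le_of_sq_le_sq ?_ (by positivity))
  calc a ^ 2 ≤ 36 * (1 / 2) ^ k := by rwa [one_div, inv_pow, ← div_eq_mul_inv]
    _ ≤ 36 * (9 / 16) ^ k := by
      have : (1 / 2 : ℝ) ≤ 9 / 16 := by norm_num
      exact mul_le_mul_of_nonneg_left (pow_le_pow_left₀ (by norm_num) this k) (by norm_num)
    _ = (6 * (3 / 4) ^ k) ^ 2 := by rw [mul_pow, ← pow_mul, mul_comm k, pow_mul]; norm_num

/-- An arbitrary bijection splitting off one binary digit. -/
noncomputable def dyadicDigit (k : ℕ) : ZMod (2 ^ (k + 1)) ≃ Fin 2 × ZMod (2 ^ k) :=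
  Fintype.equivOfCardEq (by simp [ZMod.card, pow_succ'])

/-- The Davie system of chirps over the rings `ZMod (2 ^ k)`. With digits `c, d < 2`, the labels
`1 + c + 2 * d` run through the nonzero elements of `ZMod 5`, the label `0` being that of `σ`. -/
noncomputable def chirpDavieSystem : DavieSystem (fun k => ZMod (2 ^ k) × ZMod (2 ^ k))
    fun k => ZMod 5 × ZMod (2 ^ k) × ZMod (2 ^ k) where
  σ k j := chirp ZMod.stdAddChar ZMod.stdAddChar (fun a => (a.val : ZMod (2 ^ k))) (0, j)
  τ k := linkChirp ZMod.stdAddChar ZMod.stdAddChar ZMod.stdAddChar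
    (fun a => (a.val : ZMod (2 ^ k))) (dyadicDigit k) (fun c => 1 + (c.val : ZMod 5))
    fun d => 2 * (d.val : ZMod 5)
  δ k := 6 * (3 / 4) ^ k
  norm_σ _ _ _ := norm_chirp _ _
  norm_τ _ _ _ := norm_linkChirp _ _
  sum_conj_σ_mul_σ _ _ _ h := sum_conj_chirp_mul_chirp (ZMod.isPrimitive_stdAddChar _)
    (ZMod.isPrimitive_stdAddChar _) ((Prod.mk_right_injective 0).ne h)
  sum_conj_τ_mul_τ _ _ _ := sum_conj_linkChirp_mul_linkChirp (ZMod.isPrimitive_stdAddChar _)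
    (ZMod.isPrimitive_stdAddChar _) (by decide)
  sum_conj_σ_mul_τ _ := sum_conj_chirp_mul_linkChirp (ZMod.isPrimitive_stdAddChar _)
    (ZMod.isPrimitive_stdAddChar _) (by decide)
  summable_δ := (summable_geometric_of_lt_one (by norm_num) (by norm_num)).mul_left 6
  antitone_δ _ _ h := mul_le_mul_of_nonneg_left
    (pow_le_pow_of_le_one (by norm_num) (by norm_num) h) (by norm_num)
  norm_kernel_sub_le k _ _ := by
    refine le_six_mul_geometric ((norm_mean_linkChirp_sub_mean_chirp_sq_le
      (ZMod.isPrimitive_stdAddChar _) card_two_mul_val_sub_val_mul_eq_zero_le).trans ?_)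
    rw [ZMod.card]
    push_cast
    gcongr
    norm_num
  norm_cross_le k _ _ := by
    refine le_six_mul_geometric ((norm_mean_conj_chirp_mul_linkChirp_sq_le
      (ZMod.isPrimitive_stdAddChar _) _ _).trans ?_)
    rw [ZMod.card]
    push_cast
    gcongr
    norm_num

end DyadicSystem

theorem no_universal_separable_Banach_algebra_bounded_general {B : Type*} [NonUnitalNormedRing B]
    [NormedSpace ℂ B] [IsScalarTower ℂ B B] [SMulCommClass ℂ B B] [SeparableSpace B] :
    ∃ A : SepBanachAlgebra,
      (∀ x y : A.carrier, x * y = y * x) ∧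
      ¬ ∃ φ : A.carrier →ₙₐ[ℂ] B,
        Function.Injective φ ∧
        (∃ C : ℝ, ∀ a : A.carrier, ‖φ a‖ ≤ C * ‖a‖) :=
  chirpDavieSystem.exists_comm_sepBanachAlgebra_not_exists_injective B

/-- There is no separable complex Banach algebra `B` such that every separable
complex Banach algebra `A` admits a bounded homomorphic embedding into `B`:
for every separable Banach algebra `B` there is a separable Banach algebra `A`
— which can moreover be chosen with commutative multiplication — such that no
injective bounded algebra homomorphism `φ : A → B` is bounded below. -/
theorem no_universal_separable_Banach_algebra_bounded
    (B : SepBanachAlgebra) :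
    ∃ A : SepBanachAlgebra,
      (∀ x y : A.carrier, x * y = y * x) ∧
      ¬ ∃ φ : A.carrier →ₙₐ[ℂ] B.carrier,
        Function.Injective φ ∧
        (∃ C : ℝ, ∀ a : A.carrier, ‖φ a‖ ≤ C * ‖a‖) ∧
        (∃ c : ℝ, 0 < c ∧ ∀ a : A.carrier, c * ‖a‖ ≤ ‖φ a‖) :=
  have ⟨A, comm, h⟩ := no_universal_separable_Banach_algebra_bounded_general (B := B.carrier)
  ⟨A, comm, fun ⟨φ, inj, bdd, _⟩ => h ⟨φ, inj, bdd⟩⟩
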